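/- Let d ≥ 0, let m_0, m_1, …, m_d and b be smooth (C^∞) functions ℝ → ℝ, and define Ω_b(h) = h' − b·h on smooth functions. Then for every smooth u : ℝ → ℝ and every x ∈ ℝ, Σ_{i=0}^{d} m_i(x)·(Ω_b^{[i]} u)(x) = Σ_{j=0}^{d} R_j(x)·u^{(j)}(x), where R_j = Σ_{w=j}^{d} m_w·C(w,j)·B_{w−j}(−b, −b', …, −b^{(w−j−1)}) (with B_0 = 1, so R_d = m_d). In other words, rewriting the operator Σ m_i (D_x − b)^i in powers of D_x, the coefficient of D_x^j is exactly the invariant R_j of Theorem 1. -/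

import Mathlib

/-!
Let `φ = exp (-∫ b)`, so that `φ' = -b φ`. Then `(h φ)' = (Ω_b h) φ`, hence
`(Ω_b^[n] u) φ = (u φ)^{(n)}`, and Leibniz' rule gives
`Ω_b^[n] u = ∑ j, C(n, j) (φ^{(n-j)} / φ) u^{(j)}`. Multiplying by `m_n`, summing over `n` and
exchanging the two sums yields the theorem once `φ^{(n)} / φ = B_n(-b, -b', …)` is known
(`iteratedDeriv_integratingFactor`).

For the latter, Leibniz' rule applied to `φ' = -b φ` shows that `φ^{(n)} / φ` satisfies
`B_{n+1} = ∑ i, C(n, i) x_{i+1} B_{n-i}` with `x_{i+1} = -b^{(i)}`, so it remains to prove this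
recurrence for the complete Bell polynomials (`bellComplete_succ`). To that end `B_n / n!` is
rewritten as a sum over all partitions of `n`, encoded by finitely supported multiplicity
functions `ℕ →₀ ℕ` (`bellComplete_eq`). Multiplying this sum by `n`, the total size of the blocks,
and removing one block at a time gives the recurrence (`weightSum_recurrence`).
-/

/-- The partial Bell polynomial `B_{n,k}(x_1, …, x_{n-k+1})`, a sum over all
sequences `(j_1, …, j_{n-k+1})` of nonnegative integers with
`j_1 + ⋯ + j_{n-k+1} = k` and `j_1 + 2 j_2 + ⋯ + (n-k+1) j_{n-k+1} = n`.
The argument `x m` is `x_m` (indices `1, …, n-k+1` are used). -/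
noncomputable def bellPartial (n k : ℕ) (x : ℕ → ℝ) : ℝ :=
  ∑ j ∈ Finset.univ.filter
      (fun j : Fin (n - k + 1) → Fin (n + 1) =>
        (∑ m : Fin (n - k + 1), (j m : ℕ)) = k ∧
        (∑ m : Fin (n - k + 1), ((m : ℕ) + 1) * (j m : ℕ)) = n),
    ((n.factorial : ℝ) / ∏ m : Fin (n - k + 1), ((j m : ℕ).factorial : ℝ)) *
      ∏ m : Fin (n - k + 1), (x ((m : ℕ) + 1) / (((m : ℕ) + 1).factorial : ℝ)) ^ ((j m : ℕ))

/-- The complete Bell polynomial `B_n(x_1, …, x_n) = ∑_{k=1}^n B_{n,k}`, with `B_0 = 1`. -/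
noncomputable def bellComplete (n : ℕ) (x : ℕ → ℝ) : ℝ :=
  if n = 0 then 1 else ∑ k ∈ Finset.Icc 1 n, bellPartial n k x

/-- The operator `Ω_b(h) = h' - b·h` on functions `ℝ → ℝ`. -/
noncomputable def Omega (b : ℝ → ℝ) (h : ℝ → ℝ) : ℝ → ℝ :=
  fun x => deriv h x - b x * h x

/-! ### The recurrence for complete Bell polynomials -/

/-- The weight `∑ (m + 1) j_m` of a multiplicity sequence. Indices are shifted by one: `j m` is the
multiplicity of the block size `m + 1`. -/
noncomputable def cWeight (j : ℕ →₀ ℕ) : ℕ := j.sum fun m a => (m + 1) * a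

theorem mul_le_cWeight (j : ℕ →₀ ℕ) (m : ℕ) : (m + 1) * j m ≤ cWeight j := by
  by_cases h : m ∈ j.support
  · exact Finset.single_le_sum (f := fun m => (m + 1) * j m) (fun _ _ => Nat.zero_le _) h
  · simp [Finsupp.notMem_support_iff.1 h]

/-- The multiplicity sequences of weight `n`, i.e. the partitions of `n`. The bounding box `finsupp`
only makes the set visibly finite: by `mem_weightSet` it excludes no sequence of weight `n`. -/
noncomputable def weightSet (n : ℕ) : Finset (ℕ →₀ ℕ) :=
  ((Finset.range n).finsupp fun _ => Finset.range (n + 1)).filter fun j => cWeight j = n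

theorem mem_weightSet {n : ℕ} {j : ℕ →₀ ℕ} : j ∈ weightSet n ↔ cWeight j = n := by
  simp only [weightSet, Finset.mem_filter, Finset.mem_finsupp_iff, and_iff_right_iff_imp]
  intro h
  refine ⟨fun m hm => ?_, fun m _ => ?_⟩
  · have h1 := mul_le_cWeight j m
    have h2 := Nat.pos_of_ne_zero (Finsupp.mem_support_iff.1 hm)
    simp only [Finset.mem_range]
    nlinarith
  · have h1 := mul_le_cWeight j m
    simp only [Finset.mem_range]
    nlinarith

/-- The monomial `∏ y_m ^ j_m / j_m!`. -/
noncomputable def monomialTerm (y : ℕ → ℝ) (j : ℕ →₀ ℕ) : ℝ :=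
  j.prod fun m a => y m ^ a / (a.factorial : ℝ)

theorem cWeight_add_single (j : ℕ →₀ ℕ) (m : ℕ) :
    cWeight (j + Finsupp.single m 1) = cWeight j + (m + 1) := by
  unfold cWeight
  rw [Finsupp.sum_add_index' (by simp) (by intros; ring)]
  simp

theorem monomialTerm_add_single (y : ℕ → ℝ) (j : ℕ →₀ ℕ) (m : ℕ) :
    ((j m + 1 : ℕ) : ℝ) * monomialTerm y (j + Finsupp.single m 1) = y m * monomialTerm y j := by
  unfold monomialTerm
  rw [← Finsupp.mul_prod_erase' (j + Finsupp.single m 1) m _ (by simp),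
    ← Finsupp.mul_prod_erase' j m _ (by simp)]
  have : (j + Finsupp.single m 1).erase m = j.erase m := by
    ext i
    rcases eq_or_ne i m with rfl | h
    · simp
    · simp [Finsupp.erase_ne h]
  rw [this]
  have h2 : (j + Finsupp.single m 1 : ℕ →₀ ℕ) m = j m + 1 := by simp
  rw [h2, Nat.factorial_succ, pow_succ]
  push_cast
  have : ((j m).factorial : ℝ) ≠ 0 := by positivity
  have : (j m : ℝ) + 1 ≠ 0 := by positivity
  field_simp

/-- The coefficient of `t ^ n` in `exp (∑ y_m t ^ (m + 1))`, written as a sum over partitions of `n`. -/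
noncomputable def weightSum (y : ℕ → ℝ) (n : ℕ) : ℝ := ∑ j ∈ weightSet n, monomialTerm y j

/-- Removing one block of size `m + 1` is a bijection from the partitions of `n` having such a block
to the partitions of `n - (m + 1)`; the factor `j m` turns `1 / j_m!` into `1 / (j_m - 1)!`. -/
theorem sum_apply_mul_monomialTerm (y : ℕ → ℝ) {n m : ℕ} (hm : m < n) :
    ∑ j ∈ weightSet n, (j m : ℝ) * monomialTerm y j = y m * weightSum y (n - 1 - m) := by
  rw [weightSum, Finset.mul_sum]
  symm
  refine Finset.sum_of_injOn (fun j => j + Finsupp.single m 1) ?_ ?_ ?_ ?_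
  · intro a _ b _ h
    exact add_right_cancel h
  · intro j hj
    have := mem_weightSet.1 (Finset.mem_coe.1 hj)
    simp only [Finset.mem_coe, mem_weightSet, cWeight_add_single]
    omega
  · intro j hj hj'
    have : j m = 0 := by
      by_contra h
      refine hj' ⟨j - Finsupp.single m 1, ?_, ?_⟩
      · have h2 := cWeight_add_single (j - Finsupp.single m 1) m
        rw [tsub_add_cancel_of_le (Finsupp.single_le_iff.2 (Nat.one_le_iff_ne_zero.2 h)), mem_weightSet.1 hj] at h2
        simp only [Finset.mem_coe, mem_weightSet]
        omega
      · exact tsub_add_cancel_of_le (Finsupp.single_le_iff.2 (Nat.one_le_iff_ne_zero.2 h))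
    simp [this]
  · intro j _
    rw [← monomialTerm_add_single]
    simp

/-- The coefficient form of `F' = G' F` for `F = exp G`, obtained by writing `n` as the weight of each
of its partitions. -/
theorem weightSum_recurrence (y : ℕ → ℝ) (n : ℕ) :
    (n : ℝ) * weightSum y n
      = ∑ m ∈ Finset.range n, ((m : ℝ) + 1) * (y m * weightSum y (n - 1 - m)) := by
  have h : ∀ j ∈ weightSet n, (n : ℝ) * monomialTerm y j
      = ∑ m ∈ Finset.range n, ((m : ℝ) + 1) * ((j m : ℝ) * monomialTerm y j) := by
    intro j hj
    have hs : j.support ⊆ Finset.range n :=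
      (Finset.mem_finsupp_iff.1 (Finset.mem_filter.1 hj).1).1
    have h1 : cWeight j = n := mem_weightSet.1 hj
    rw [cWeight, Finsupp.sum_of_support_subset _ hs _ (by simp)] at h1
    conv_lhs => rw [← h1]
    push_cast
    rw [Finset.sum_mul]
    exact Finset.sum_congr rfl fun _ _ => by ring
  rw [weightSum, Finset.mul_sum, Finset.sum_congr rfl h, Finset.sum_comm]
  refine Finset.sum_congr rfl fun m hm => ?_
  rw [← Finset.mul_sum, sum_apply_mul_monomialTerm y (Finset.mem_range.1 hm)]

theorem weightSum_zero (y : ℕ → ℝ) : weightSum y 0 = 1 := by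
  have : weightSet 0 = {0} := by
    ext j
    rw [mem_weightSet, Finset.mem_singleton]
    constructor
    · intro h
      ext m
      have := mul_le_cWeight j m
      simp only [Finsupp.coe_zero, Pi.zero_apply]
      nlinarith
    · rintro rfl; simp [cWeight]
  simp [weightSum, this, monomialTerm]

/-- If a partition with `j.degree` blocks has a block of size `m + 1`, its other blocks have size at
least one. This is why only the block sizes up to `n - k + 1` enter `B_{n,k}`. -/
theorem degree_add_le_cWeight (j : ℕ →₀ ℕ) {m : ℕ} (hm : j m ≠ 0) :
    j.degree + m ≤ cWeight j := by
  have h2 : cWeight j = j.degree + ∑ i ∈ j.support, i * j i := by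
    rw [cWeight, Finsupp.sum, Finsupp.degree_apply, ← Finset.sum_add_distrib]
    exact Finset.sum_congr rfl fun _ _ => by ring
  have h3 : m * j m ≤ ∑ i ∈ j.support, i * j i :=
    Finset.single_le_sum (f := fun i => i * j i) (fun _ _ => Nat.zero_le _)
      (Finsupp.mem_support_iff.2 hm)
  have := Nat.pos_of_ne_zero hm
  nlinarith

theorem degree_eq_sum_of_support_subset {j : ℕ →₀ ℕ} {s : Finset ℕ} (h : j.support ⊆ s) :
    j.degree = ∑ m ∈ s, j m :=
  Finset.sum_subset h fun _ _ hm => Finsupp.notMem_support_iff.1 hm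

/-- `B_{n,k} / n!` is the part of `weightSum` carried by the partitions of `n` into `k` blocks. -/
theorem bellPartial_eq (n k : ℕ) (x : ℕ → ℝ) :
    bellPartial n k x = n.factorial * ∑ j ∈ weightSet n with j.degree = k,
      monomialTerm (fun m => x (m + 1) / ((m + 1).factorial : ℝ)) j := by
  rw [bellPartial, Finset.mul_sum]
  symm
  have hsupp : ∀ j ∈ (weightSet n).filter (fun j => j.degree = k),
      j.support ⊆ Finset.range (n - k + 1) := by
    intro j hj m hm
    obtain ⟨h1, h2⟩ := Finset.mem_filter.1 hj
    have h3 := degree_add_le_cWeight j (Finsupp.mem_support_iff.1 hm)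
    rw [mem_weightSet.1 h1, h2] at h3
    simp only [Finset.mem_range]; omega
  have hle : ∀ j ∈ (weightSet n).filter (fun j => j.degree = k), ∀ m, j m < n + 1 := by
    intro j hj m
    have h1 := mul_le_cWeight j m
    rw [mem_weightSet.1 (Finset.mem_filter.1 hj).1] at h1
    nlinarith
  refine Finset.sum_bij (fun j hj m => ⟨j m, hle j hj m⟩) ?_ ?_ ?_ ?_
  · intro j hj
    obtain ⟨h1, h2⟩ := Finset.mem_filter.1 hj
    rw [mem_weightSet, cWeight, Finsupp.sum_of_support_subset _ (hsupp j hj) _ (by simp)] at h1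
    rw [degree_eq_sum_of_support_subset (hsupp j hj)] at h2
    simp only [Finset.mem_filter, Finset.mem_univ, true_and]
    rw [Finset.sum_range] at h1 h2
    exact ⟨h2, h1⟩
  · intro j hj j' hj' h
    ext m
    by_cases hm : m < n - k + 1
    · simpa using congrFun h ⟨m, hm⟩
    · have h0 : ∀ j ∈ (weightSet n).filter (fun j => j.degree = k), j m = 0 := fun j hj => by
        by_contra h
        exact hm (Finset.mem_range.1 (hsupp j hj (Finsupp.mem_support_iff.2 h)))
      rw [h0 j hj, h0 j' hj']
  · intro f hf
    simp only [Finset.mem_filter, Finset.mem_univ, true_and] at hf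
    have hs : ∀ m, (if h : m < n - k + 1 then (f ⟨m, h⟩ : ℕ) else 0) ≠ 0 →
        m ∈ Finset.range (n - k + 1) := by
      intro m hm
      by_contra h
      exact hm (dif_neg (by simpa using h))
    let j : ℕ →₀ ℕ := Finsupp.onFinset (Finset.range (n - k + 1)) _ hs
    have hj : ∀ m : Fin (n - k + 1), j m = f m := fun m => by
      simp only [j, Finsupp.onFinset_apply, m.isLt, dif_pos]
    have hjs : j.support ⊆ Finset.range (n - k + 1) := Finsupp.support_onFinset_subset
    refine ⟨j, ?_, ?_⟩
    · rw [Finset.mem_filter, mem_weightSet, cWeight,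
        Finsupp.sum_of_support_subset _ hjs _ (by simp),
        degree_eq_sum_of_support_subset hjs, Finset.sum_range, Finset.sum_range]
      simp only [hj]
      exact ⟨hf.2, hf.1⟩
    · ext m; simp [hj]
  · intro j hj
    rw [monomialTerm, Finsupp.prod_of_support_subset _ (hsupp j hj) _ (by simp),
      Finset.prod_range, Finset.prod_div_distrib]
    ring

theorem bellComplete_eq (n : ℕ) (x : ℕ → ℝ) :
    bellComplete n x =
      n.factorial * weightSum (fun m => x (m + 1) / ((m + 1).factorial : ℝ)) n := by
  rw [bellComplete]
  split_ifs with hn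
  · subst hn; simp [weightSum_zero]
  · simp only [bellPartial_eq]
    rw [← Finset.mul_sum, weightSum, Finset.sum_fiberwise_of_maps_to]
    intro j hj
    rw [mem_weightSet] at hj
    obtain ⟨m, hm⟩ : ∃ m, j m ≠ 0 := by
      by_contra! h
      have : j = 0 := by ext m; simp [h m]
      subst this
      exact hn (by simpa [cWeight] using hj.symm)
    have h1 := degree_add_le_cWeight j hm
    have h2 : j m ≤ j.degree := Finsupp.le_degree m j
    simp only [Finset.mem_Icc]; omega

theorem bellComplete_succ (n : ℕ) (x : ℕ → ℝ) :
    bellComplete (n + 1) x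
      = ∑ i ∈ Finset.range (n + 1), (n.choose i : ℝ) * x (i + 1) * bellComplete (n - i) x := by
  simp only [bellComplete_eq]
  rw [Nat.factorial_succ, mul_comm (n + 1), Nat.cast_mul, mul_assoc, weightSum_recurrence,
    Finset.mul_sum]
  refine Finset.sum_congr rfl fun i hi => ?_
  have hi : i ≤ n := by simpa [Nat.lt_succ_iff] using hi
  rw [Nat.cast_choose ℝ hi, Nat.factorial_succ]
  have h1 : (i.factorial : ℝ) ≠ 0 := by positivity
  have h2 : ((n - i).factorial : ℝ) ≠ 0 := by positivity
  have h3 : (i : ℝ) + 1 ≠ 0 := by positivity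
  simp only [Nat.add_sub_cancel]
  push_cast
  field_simp

/-! ### The integrating factor -/

theorem contDiff_Omega {b h : ℝ → ℝ} (hb : ContDiff ℝ (⊤ : ℕ∞) b)
    (hh : ContDiff ℝ (⊤ : ℕ∞) h) : ContDiff ℝ (⊤ : ℕ∞) (Omega b h) :=
  (contDiff_infty_iff_deriv.1 hh).2.sub (hb.mul hh)

theorem contDiff_Omega_iterate {b h : ℝ → ℝ} (hb : ContDiff ℝ (⊤ : ℕ∞) b)
    (hh : ContDiff ℝ (⊤ : ℕ∞) h) (n : ℕ) : ContDiff ℝ (⊤ : ℕ∞) ((Omega b)^[n] h) := by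
  induction n with
  | zero => exact hh
  | succ n ih => rw [Function.iterate_succ_apply']; exact contDiff_Omega hb ih

/-- The witness is `φ = exp (-∫ b)`. -/
theorem exists_integratingFactor {b : ℝ → ℝ} (hb : ContDiff ℝ (⊤ : ℕ∞) b) :
    ∃ φ : ℝ → ℝ, ContDiff ℝ (⊤ : ℕ∞) φ ∧ (∀ x, φ x ≠ 0) ∧ deriv φ = (-b) * φ := by
  have hA : ∀ x, HasDerivAt (fun x => ∫ t in (0 : ℝ)..x, b t) (b x) x := fun x =>
    hb.continuous.integral_hasStrictDerivAt 0 x |>.hasDerivAt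
  refine ⟨fun x => Real.exp (-∫ t in (0 : ℝ)..x, b t), ?_, fun x => Real.exp_ne_zero _, ?_⟩
  · refine ContDiff.exp (ContDiff.neg (contDiff_infty_iff_deriv.2
      ⟨fun x => (hA x).differentiableAt, ?_⟩))
    rwa [funext fun x => (hA x).deriv]
  · ext x
    exact (hA x).fun_neg.exp.deriv.trans (by simp [mul_comm])

/-- Multiplication by `φ` conjugates `Ω_b` into the derivative, since `(h φ)' = (h' - b h) φ`. -/
theorem Omega_iterate_mul {b φ u : ℝ → ℝ} (hb : ContDiff ℝ (⊤ : ℕ∞) b)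
    (hφ : ContDiff ℝ (⊤ : ℕ∞) φ) (hd : deriv φ = (-b) * φ) (hu : ContDiff ℝ (⊤ : ℕ∞) u) (n : ℕ) :
    (Omega b)^[n] u * φ = iteratedDeriv n (u * φ) := by
  induction n with
  | zero => simp
  | succ n ih =>
    rw [iteratedDeriv_succ, ← ih, Function.iterate_succ_apply']
    ext x
    rw [deriv_mul ((contDiff_Omega_iterate hb hu n).differentiable (by simp) x)
      (hφ.differentiable (by simp) x), hd]
    simp only [Omega, Pi.mul_apply, Pi.neg_apply]
    ring

/-- By Leibniz applied to `φ' = -b φ`, the ratios `φ^{(n)} / φ` obey the recurrence of the complete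
Bell polynomials. -/
theorem iteratedDeriv_integratingFactor {b φ : ℝ → ℝ} (hb : ContDiff ℝ (⊤ : ℕ∞) b)
    (hφ : ContDiff ℝ (⊤ : ℕ∞) φ) (hd : deriv φ = (-b) * φ) (x : ℝ) (n : ℕ) :
    iteratedDeriv n φ x = bellComplete n (fun s => -(iteratedDeriv (s - 1) b x)) * φ x := by
  induction n using Nat.strong_induction_on with
  | _ n ih =>
    cases n with
    | zero => simp [bellComplete]
    | succ n =>
      rw [iteratedDeriv_succ', hd, iteratedDeriv_mul
        (f := -b) (hb.neg.of_le (by exact_mod_cast le_top)).contDiffAt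
        (hφ.of_le (by exact_mod_cast le_top)).contDiffAt, bellComplete_succ, Finset.sum_mul]
      refine Finset.sum_congr rfl fun i hi => ?_
      rw [ih (n - i) (by omega), iteratedDeriv_neg]
      simp only [Nat.add_sub_cancel]
      ring

/-- The case of a single power of `Ω_b`. -/
theorem Omega_iterate_eq {b u : ℝ → ℝ} (hb : ContDiff ℝ (⊤ : ℕ∞) b)
    (hu : ContDiff ℝ (⊤ : ℕ∞) u) (x : ℝ) (n : ℕ) :
    (Omega b)^[n] u x = ∑ j ∈ Finset.range (n + 1), (n.choose j : ℝ)
      * bellComplete (n - j) (fun s => -(iteratedDeriv (s - 1) b x)) * iteratedDeriv j u x := by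
  obtain ⟨φ, hφ, h0, hd⟩ := exists_integratingFactor hb
  refine mul_right_cancel₀ (h0 x) ?_
  have h := congrFun (Omega_iterate_mul hb hφ hd hu n) x
  rw [Pi.mul_apply, iteratedDeriv_mul (hu.of_le (by exact_mod_cast le_top)).contDiffAt
        (hφ.of_le (by exact_mod_cast le_top)).contDiffAt] at h
  rw [h, Finset.sum_mul]
  refine Finset.sum_congr rfl fun j _ => ?_
  rw [iteratedDeriv_integratingFactor hb hφ hd]
  ring

/-- Rewriting the operator `∑_{i=0}^d m_i (D_x - b)^i` in powers of `D_x`, the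
coefficient of `D_x^j` is `R_j = ∑_{w=j}^d m_w C(w,j) B_{w-j}(-b, …, -b^{(w-j-1)})`. -/
theorem omega_powers_expansion
    (d : ℕ) (m : ℕ → ℝ → ℝ) (b : ℝ → ℝ)
    (hm : ∀ i, ContDiff ℝ (⊤ : ℕ∞) (m i)) (hb : ContDiff ℝ (⊤ : ℕ∞) b)
    (u : ℝ → ℝ) (hu : ContDiff ℝ (⊤ : ℕ∞) u) (x : ℝ) :
    ∑ i ∈ Finset.range (d + 1), m i x * (Omega b)^[i] u x
      = ∑ j ∈ Finset.range (d + 1),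
          (∑ w ∈ Finset.Icc j d,
            m w x * (w.choose j : ℝ)
              * bellComplete (w - j) (fun s => -(iteratedDeriv (s - 1) b x)))
            * iteratedDeriv j u x := by
  simp only [Omega_iterate_eq hb hu, Finset.mul_sum, Finset.sum_mul]
  rw [Finset.sum_comm' (t' := Finset.range (d + 1)) (s' := fun j => Finset.Icc j d)
    (by intro i j; simp only [Finset.mem_range, Finset.mem_Icc]; omega)]
  exact Finset.sum_congr rfl fun j _ => Finset.sum_congr rfl fun w _ => by ring
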